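/- arXiv:cs/0308028 — 4 statements merged into one kernel-verified Lean document; each statement's English description precedes it below -/
import Mathlib

section
/- In algorithm M(k,n) under m/m' and m/φ faults only, the senders along any causal chain of messages are pairwise distinct; consequently the sender-set of a message received in round r consists of exactly r distinct agents, the first of which is the instigator. -/
/-!
Every agent sends in at most one round: the instigator in round `1`, any other agent in the round
right after its first reception. The `i`-th sender of a causal chain (counting from `0`) sends in
round `i + 1`, because its message is received in that round; so two positions of the chain held by
the same agent coincide.
-/

section

variable {α : Type*} {instigator : α} {send : ℕ → α → Prop} {recvFrom : ℕ → α → α → Prop}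

theorem send_round_unique (hinst : ∀ t, send t instigator → t = 1)
    (hfirst : ∀ i, i ≠ instigator → ∀ t, send (t + 1) i →
      (∃ j, recvFrom t i j) ∧ ∀ t' < t, ∀ j, ¬ recvFrom t' i j)
    {i : α} {s t : ℕ} (hs : send (s + 1) i) (ht : send (t + 1) i) : s = t := by
  obtain rfl | hi := eq_or_ne i instigator
  · exact Nat.succ_injective ((hinst _ hs).trans (hinst _ ht).symm)
  · have first_reception (u : ℕ) (hu : send (u + 1) i) : IsLeast {v | ∃ j, recvFrom v i j} u :=
      have ⟨received, not_before⟩ := hfirst i hi u hu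
      ⟨received, fun v ⟨j, hj⟩ => not_lt.1 fun hvu => not_before v hvu j hj⟩
    exact (first_reception s hs).unique (first_reception t ht)

theorem send_succ_of_causal_chain (hsent : ∀ t i j, recvFrom t i j → send t j)
    {r : ℕ} {c : ℕ → α} {p : α}
    (hchain : ∀ i, i + 1 < r → recvFrom (i + 1) (c (i + 1)) (c i))
    (hfinal : recvFrom r p (c (r - 1))) {i : ℕ} (hi : i < r) : send (i + 1) (c i) := by
  obtain hlt | rfl := (Nat.succ_le_of_lt hi).lt_or_eq
  · exact hsent _ _ _ (hchain i hlt)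
  · exact hsent _ _ _ hfinal

theorem causal_chain_senders_distinct_general [DecidableEq α]
    (hround1 : ∀ j, send 1 j → j = instigator)
    (hinst : ∀ t, send t instigator → t = 1)
    (hfirst : ∀ i, i ≠ instigator → ∀ t, send (t + 1) i →
      (∃ j, recvFrom t i j) ∧ ∀ t' < t, ∀ j, ¬ recvFrom t' i j)
    (hsent : ∀ t i j, recvFrom t i j → send t j)
    {r : ℕ} (hr : 1 ≤ r) {c : ℕ → α} {p : α}
    (hchain : ∀ i, i + 1 < r → recvFrom (i + 1) (c (i + 1)) (c i))
    (hfinal : recvFrom r p (c (r - 1))) :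
    (∀ i j, i < r → j < r → c i = c j → i = j) ∧
      ((Finset.range r).image c).card = r ∧ c 0 = instigator := by
  have sends (i : ℕ) (hi : i < r) : send (i + 1) (c i) :=
    send_succ_of_causal_chain hsent hchain hfinal hi
  have distinct (i j : ℕ) (hi : i < r) (hj : j < r) (hij : c i = c j) : i = j :=
    send_round_unique hinst hfirst (sends i hi) (hij ▸ sends j hj)
  refine ⟨distinct, ?_, hround1 _ (sends 0 hr)⟩
  have injOn : Set.InjOn c (Finset.range r) := fun i hi j hj =>
    distinct i j (Finset.mem_range.1 hi) (Finset.mem_range.1 hj)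
  rw [Finset.card_image_of_injOn injOn, Finset.card_range]

end

/-- In algorithm M(k,n) under m/m' and m/φ faults only, the
senders along any causal chain of messages are pairwise distinct; consequently
the sender-set of a message received in round r consists of exactly r distinct
agents, the first of which is the instigator (agent 0).

`recvFrom t i j` means: agent i receives, in round t, a message sent by agent j.
A message received in round r is witnessed by a chain of senders
`c : ℕ → Fin n` (indices `0, …, r-1`) with `c 0 = 0`, where `c (i+1)` received
the chain's round-(i+1) message from `c i` and sent in round i+2, and the final
sender `c (r-1)` sent the message received in round r. -/
theorem causal_chain_senders_distinct (n r : ℕ) [NeZero n]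
    (send : ℕ → Fin n → Prop)
    (recvFrom : ℕ → Fin n → Fin n → Prop)
    -- only the instigator sends in round 1
    (hround1 : ∀ j, send 1 j → j = 0)
    -- the instigator sends only in round 1
    (hinst : ∀ t, send t (0 : Fin n) → t = 1)
    -- a non-instigator sends in round t+1 only if round t is the *first* round
    -- in which it received a message (already-decided agents never send again)
    (hfirst : ∀ i : Fin n, i ≠ 0 → ∀ t, send (t + 1) i →
        (∃ j, recvFrom t i j) ∧ ∀ t' < t, ∀ j, ¬ recvFrom t' i j)
    (hsent : ∀ t i j, recvFrom t i j → send t j)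
    -- a causal chain of senders for a message received in round r
    (c : ℕ → Fin n)
    (hr : 1 ≤ r)
    (hc0 : c 0 = 0)
    (hchain : ∀ i, i + 1 < r →
        recvFrom (i + 1) (c (i + 1)) (c i) ∧ send (i + 2) (c (i + 1)))
    (p : Fin n)
    (hfinal : recvFrom r p (c (r - 1))) :
    (∀ i j, i < r → j < r → c i = c j → i = j) ∧
      ((Finset.range r).image c).card = r ∧ c 0 = 0 :=
  causal_chain_senders_distinct_general hround1 hinst hfirst hsent hr
    (fun i hi => (hchain i hi).1) hfinal
end

section
/- If m/m' (corruption), m/φ (loss) and φ/m' (spurious generation) faults are all possible, then Byzantine agreement is achievable in m+1 rounds among n agents of which at most m are traitors, provided n ≥ 3m+1: running Lamport's oral-message algorithm OM(m), every loyal lieutenant obeys the same order (interactive consistency condition IC1), and if the commanding general is loyal then every loyal lieutenant obeys the order the general sent (condition IC2). -/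
/-- Boolean majority of the values `f j` for `j` in the finite set `s`,
ties broken by `default`. -/
def majorityVote {n : ℕ} (default : Bool) (s : Finset (Fin n)) (f : Fin n → Bool) : Bool :=
  if (s.filter fun j => f j = true).card > (s.filter fun j => f j = false).card then true
  else if (s.filter fun j => f j = false).card > (s.filter fun j => f j = true).card then false
  else default

/-- `omValue msg default r p g` : the value that lieutenant `g` obtains from the
sub-run OM(r) of Lamport's oral-message algorithm whose relay path is `p`
(the list of generals that have relayed so far, starting with the commander).
`msg p i` is the value general `i` receives at the end of relay path `p`
(a general receiving no message uses the default order, so `msg` is total).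
In OM(0) the lieutenant uses the value received directly; in OM(r+1) it takes
the majority of the directly received value and the values obtained, via
OM(r), from each other participating lieutenant. -/
def omValue {n : ℕ} (msg : List (Fin n) → Fin n → Bool) (default : Bool) :
    ℕ → List (Fin n) → Fin n → Bool
  | 0, p, g => msg p g
  | r + 1, p, g =>
      majorityVote default (Finset.univ.filter fun j => j ∉ p)
        (fun j => if j = g then msg p g else omValue msg default r (p ++ [j]) g)

/-!
If more than `2k + r` generals are still off the relay path, `k` of them traitors, then the same
inequality, with `r` lowered by one, survives each further relay. Hence loyal generals keep a strict
majority at every level, and the value relayed by a loyal general reaches everyone (validity).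

For agreement under a treacherous commander, compare the votes of two loyal lieutenants entry by
entry. The entry of a loyal relayer is the value it received, by validity. The entry of a
treacherous one agrees by induction, since the commander has used up one of the at most `r`
traitors; this is why `r` rounds of relaying suffice.
-/

section Majority

variable {n : ℕ} {default : Bool} {s : Finset (Fin n)}

theorem majorityVote_eq_of_two_mul_card_ne_lt {f : Fin n → Bool} {v : Bool}
    (h : 2 * (s.filter fun j => f j ≠ v).card < s.card) : majorityVote default s f = v := by
  have card_add := s.card_filter_add_card_filter_not (fun j => f j = v)
  cases v <;>
    simp only [ne_eq, Bool.not_eq_true, Bool.not_eq_false] at h card_add <;>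
    grind [majorityVote]

theorem majorityVote_congr {f g : Fin n → Bool} (h : ∀ j ∈ s, f j = g j) :
    majorityVote default s f = majorityVote default s g := by
  have filter_eq (b : Bool) : (s.filter fun j => f j = b) = s.filter fun j => g j = b :=
    Finset.filter_congr fun j hj => by rw [h j hj]
  simp only [majorityVote, filter_eq]

end Majority

section OffPath

variable {α : Type*} [DecidableEq α] {s : Finset α} {p : List α} {j : α}

/-- The members of `s` that have not yet relayed along the path `p`. With `s = Finset.univ` these
are the lieutenants of the sub-run with path `p`; with `s` the set of traitors, the traitors among
them. -/
def offPath (s : Finset α) (p : List α) : Finset α := s.filter fun j => j ∉ p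

theorem mem_offPath : j ∈ offPath s p ↔ j ∈ s ∧ j ∉ p := Finset.mem_filter

theorem offPath_nil : offPath s [] = s := by simp [offPath]

theorem offPath_append_singleton : offPath s (p ++ [j]) = (offPath s p).erase j := by
  ext x
  simp only [mem_offPath, Finset.mem_erase, List.mem_append, List.mem_singleton]
  tauto

theorem card_offPath_append_singleton_add_one (hs : j ∈ s) (hp : j ∉ p) :
    (offPath s (p ++ [j])).card + 1 = (offPath s p).card := by
  rw [offPath_append_singleton, Finset.card_erase_add_one (mem_offPath.2 ⟨hs, hp⟩)]

end OffPath

section OralMessages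

variable {n : ℕ} {msg : List (Fin n) → Fin n → Bool} {default : Bool} {T : Finset (Fin n)}
  {r : ℕ} {p : List (Fin n)} {c g g' j : Fin n}

/-- The generals outside `T` relay faithfully: at the end of a path whose last relayer `j` is loyal,
everyone receives what `j` itself received. For the empty path, `msg [] j` plays the role of the
order that `j` issues as commander. -/
def RelaysFaithfully (msg : List (Fin n) → Fin n → Bool) (T : Finset (Fin n)) : Prop :=
  ∀ j ∉ T, ∀ p i, msg (p ++ [j]) i = msg p j

/-- The bound `2k + r < N` under which loyal generals dominate `OM(r)`. Here `N` and `k` count the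
generals and the traitors off `p`, so the commander of `OM(r)`, who is about to extend `p`, is
included. -/
def LoyalDominate (T : Finset (Fin n)) (r : ℕ) (p : List (Fin n)) : Prop :=
  2 * (offPath T p).card + r < (offPath Finset.univ p).card

theorem LoyalDominate.append_singleton (hdom : LoyalDominate T (r + 1) p) (hj : j ∉ p) :
    LoyalDominate T r (p ++ [j]) := by
  have traitors_le : (offPath T (p ++ [j])).card ≤ (offPath T p).card := by
    rw [offPath_append_singleton]
    exact Finset.card_erase_le
  have generals_eq := card_offPath_append_singleton_add_one (Finset.mem_univ j) hj
  unfold LoyalDominate at *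
  omega

/-- The entry for general `j` in the vote of lieutenant `g` concluding `OM(r + 1)` along `p`: what
`g` received directly if `j = g`, and otherwise what `g` obtains from `OM(r)` commanded by `j`. -/
def voteEntry (msg : List (Fin n) → Fin n → Bool) (default : Bool) (r : ℕ) (p : List (Fin n))
    (g j : Fin n) : Bool :=
  if j = g then msg p g else omValue msg default r (p ++ [j]) g

theorem omValue_succ : omValue msg default (r + 1) p g =
    majorityVote default (offPath Finset.univ p) (voteEntry msg default r p g) := rfl

theorem voteEntry_eq_msg (hsub : omValue msg default r (p ++ [j]) g = msg p j) :
    voteEntry msg default r p g j = msg p j := by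
  unfold voteEntry
  split_ifs with hjg
  · rw [hjg]
  · exact hsub

theorem omValue_eq_of_loyal_commander (hrelay : RelaysFaithfully msg T) (hcT : c ∉ T) (hcp : c ∉ p)
    (hdom : LoyalDominate T r p) : omValue msg default r (p ++ [c]) g = msg p c := by
  induction r generalizing p c with
  | zero => exact hrelay c hcT p g
  | succ r ih =>
    have hdom' : LoyalDominate T r (p ++ [c]) := hdom.append_singleton hcp
    have loyal_entry (j : Fin n) (hjp : j ∉ p ++ [c]) (hjT : j ∉ T) :
        voteEntry msg default r (p ++ [c]) g j = msg p c :=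
      (voteEntry_eq_msg (ih hjT hjp hdom')).trans (hrelay c hcT p j)
    have dissent_subset : ((offPath Finset.univ (p ++ [c])).filter fun j =>
        voteEntry msg default r (p ++ [c]) g j ≠ msg p c) ⊆ offPath T (p ++ [c]) := by
      intro j hj
      obtain ⟨hj, hne⟩ := Finset.mem_filter.1 hj
      have hjp := (mem_offPath.1 hj).2
      exact mem_offPath.2 ⟨by_contra fun hjT => hne (loyal_entry j hjp hjT), hjp⟩
    rw [omValue_succ]
    apply majorityVote_eq_of_two_mul_card_ne_lt
    have dissent_le := Finset.card_le_card dissent_subset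
    unfold LoyalDominate at hdom'
    omega

theorem omValue_eq_omValue_of_loyal (hrelay : RelaysFaithfully msg T) (hcp : c ∉ p)
    (hT : (offPath T p).card ≤ r) (hdom : LoyalDominate T r p) (hg : g ∉ T) (hg' : g' ∉ T) :
    omValue msg default r (p ++ [c]) g = omValue msg default r (p ++ [c]) g' := by
  induction r generalizing p c with
  | zero =>
    have hcT : c ∉ T := fun hcT =>
      (Finset.card_pos.2 ⟨c, mem_offPath.2 ⟨hcT, hcp⟩⟩).not_ge hT
    exact (hrelay c hcT p g).trans (hrelay c hcT p g').symm
  | succ r ih =>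
    by_cases hcT : c ∈ T
    · have hdom' : LoyalDominate T r (p ++ [c]) := hdom.append_singleton hcp
      have hT' : (offPath T (p ++ [c])).card ≤ r := by
        have := card_offPath_append_singleton_add_one hcT hcp
        omega
      rw [omValue_succ, omValue_succ]
      refine majorityVote_congr fun j hj => ?_
      have hjp : j ∉ p ++ [c] := (mem_offPath.1 hj).2
      by_cases hjT : j ∈ T
      · rw [voteEntry, voteEntry, if_neg (ne_of_mem_of_not_mem hjT hg),
          if_neg (ne_of_mem_of_not_mem hjT hg')]
        exact ih hjp hT' hdom'
      · have loyal_entry (i : Fin n) : voteEntry msg default r (p ++ [c]) i j = msg (p ++ [c]) j :=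
          voteEntry_eq_msg (omValue_eq_of_loyal_commander hrelay hjT hjp hdom')
        rw [loyal_entry g, loyal_entry g']
    · have obeys (i : Fin n) : omValue msg default (r + 1) (p ++ [c]) i = msg p c :=
        omValue_eq_of_loyal_commander hrelay hcT hcp hdom
      rw [obeys g, obeys g']

end OralMessages

theorem oral_messages_byzantine_agreement_general {n m : ℕ} {T : Finset (Fin n)}
    (hn : 2 * T.card + m < n) (hT : T.card ≤ m) (default : Bool)
    {msg : List (Fin n) → Fin n → Bool} (hrelay : RelaysFaithfully msg T) (c : Fin n) :
    (∀ i j : Fin n, i ∉ T → j ∉ T →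
        omValue msg default m [c] i = omValue msg default m [c] j) ∧
      (c ∉ T → ∀ i : Fin n, omValue msg default m [c] i = msg [] c) := by
  have hdom : LoyalDominate T m [] := by
    simpa only [LoyalDominate, offPath_nil, Finset.card_univ, Fintype.card_fin] using hn
  have hT' : (offPath T []).card ≤ m := by rwa [offPath_nil]
  exact ⟨fun _ _ hi hj => omValue_eq_omValue_of_loyal hrelay List.not_mem_nil hT' hdom hi hj,
    fun hc _ => omValue_eq_of_loyal_commander hrelay hc List.not_mem_nil hdom⟩

/-- If m/m', m/φ and φ/m' faults are all possible, Byzantine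
agreement is achievable in m+1 rounds among n generals of which at most m are
traitors, provided n ≥ 3m+1: running Lamport's oral-message algorithm OM(m)
with commander 0, every loyal lieutenant obeys the same order (IC1), and if
the commander is loyal every loyal lieutenant obeys the commander's order d
(IC2). Loyal generals follow the algorithm exactly: the loyal commander sends
its value `d` to every lieutenant, and a loyal general relays exactly the
value it received (oral messages are delivered unaltered); traitors may send
arbitrary values. -/
theorem oral_messages_byzantine_agreement (n m : ℕ) [NeZero n]
    (hn : 3 * m + 1 ≤ n)
    (T : Finset (Fin n)) (hT : T.card ≤ m)      -- the traitors
    (default : Bool)                             -- the default order (retreat)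
    (d : Bool)                                   -- the commander's order
    (msg : List (Fin n) → Fin n → Bool)
    (hcomm : (0 : Fin n) ∉ T → ∀ i : Fin n, i ≠ 0 → msg [0] i = d)
    (hloyal : ∀ j : Fin n, j ∉ T → ∀ p : List (Fin n), ∀ i : Fin n,
        msg (p ++ [j]) i = msg p j) :
    (∀ i j : Fin n, i ∉ T → j ∉ T → i ≠ 0 → j ≠ 0 →
        omValue msg default m [0] i = omValue msg default m [0] j) ∧
      ((0 : Fin n) ∉ T → ∀ i : Fin n, i ∉ T → i ≠ 0 →
        omValue msg default m [0] i = d) := by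
  obtain ⟨agreement, validity⟩ :=
    oral_messages_byzantine_agreement_general (by lia) hT default hloyal 0
  exact ⟨fun i j hi hj _ _ => agreement i j hi hj, fun h0 i _ hi =>
    (validity h0 i).trans ((hloyal 0 h0 [] i).symm.trans (hcomm h0 i hi))⟩
end

section
/- Let K be a field, let α₁, …, αₙ be n pairwise distinct elements of K, and let m < n. Then there exists a matrix C ∈ Matrix (Fin n) (Fin n) K, depending only on α₁, …, αₙ and m, with the following property: for every polynomial g ∈ K[X] of degree < n, if h denotes the truncation of g obtained by deleting all terms of degree exceeding m, then for every i, h(αᵢ) = Σⱼ g(αⱼ) · C j i; that is, the evaluation vector b of h equals a · C where a is the evaluation vector of g. -/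
open Polynomial

/-!
Lagrange interpolation writes a polynomial `g` of degree less than the number of nodes as
`∑ j, g (α j) • ℓ j`. Any linear map `T` sends this to `T g = ∑ j, g (α j) • T (ℓ j)`, so the values
of `T g` depend linearly on those of `g`, with coefficients `T (ℓ j) (α i)`. Truncation is linear.
-/

section Truncation

variable {R : Type*} [CommSemiring R]

/-- Truncation of polynomials to degree at most `m`, as a linear map. The shift in the definition
is there because `PowerSeries.trunc` keeps only the degrees strictly below its argument. -/
noncomputable def truncLE (m : ℕ) : R[X] →ₗ[R] R[X] :=
  PowerSeries.trunc (m + 1) ∘ₗ (coeToPowerSeries.algHom R).toLinearMap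

theorem coeff_truncLE (m : ℕ) (g : R[X]) (d : ℕ) :
    (truncLE m g).coeff d = if d ≤ m then g.coeff d else 0 := by
  simp [truncLE, PowerSeries.coeff_trunc]

theorem eq_truncLE {m : ℕ} {g h : R[X]}
    (hh : ∀ d, h.coeff d = if d ≤ m then g.coeff d else 0) : h = truncLE m g :=
  Polynomial.ext fun d => (hh d).trans (coeff_truncLE m g d).symm

end Truncation

section Evaluation

variable {K ι κ : Type*} [Field K]

theorem map_eq_sum_eval_smul_map_basis {M : Type*} [AddCommMonoid M] [Module K M] [DecidableEq ι]
    (T : K[X] →ₗ[K] M) {s : Finset ι} {α : ι → K} (hα : Set.InjOn α s)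
    {g : K[X]} (hg : g.degree < s.card) :
    T g = ∑ j ∈ s, g.eval (α j) • T (Lagrange.basis s α j) := by
  conv_lhs => rw [Lagrange.eq_interpolate hα hg]
  simp only [Lagrange.interpolate_apply, C_mul', map_sum, map_smul]

variable [Fintype ι]

/-- The matrix of an endomorphism `T` of `K[X]` in terms of values: it turns the values of a
polynomial `g` at the nodes `α` into the values of `T g` at the points `β`. It acts on row vectors,
so its rows are indexed by the nodes. -/
noncomputable def evalMatrix [DecidableEq ι] (T : K[X] →ₗ[K] K[X]) (α : ι → K) (β : κ → K) :
    Matrix ι κ K :=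
  Matrix.of fun j i => (T (Lagrange.basis Finset.univ α j)).eval (β i)

theorem eval_map_eq_sum_evalMatrix [DecidableEq ι] (T : K[X] →ₗ[K] K[X]) {α : ι → K}
    (hα : Function.Injective α) (β : κ → K) {g : K[X]} (hg : g.degree < Fintype.card ι) (i : κ) :
    (T g).eval (β i) = ∑ j, g.eval (α j) * evalMatrix T α β j i := by
  rw [map_eq_sum_eval_smul_map_basis T (s := Finset.univ) hα.injOn hg]
  simp only [eval_finsetSum, eval_smul, smul_eq_mul, evalMatrix, Matrix.of_apply]

theorem degree_reduction_matrix_general (m : ℕ) {α : ι → K} (hα : Function.Injective α)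
    (β : κ → K) :
    ∃ C : Matrix ι κ K,
      ∀ g : K[X], g.degree < Fintype.card ι →
        ∀ h : K[X], (∀ d : ℕ, h.coeff d = if d ≤ m then g.coeff d else 0) →
          ∀ i : κ, h.eval (β i) = ∑ j : ι, g.eval (α j) * C j i := by
  classical
  refine ⟨evalMatrix (truncLE m) α β, fun g hg h hh i => ?_⟩
  rw [eq_truncLE hh]
  exact eval_map_eq_sum_evalMatrix (truncLE m) hα β hg i

end Evaluation

/-- Let K be a field, α₁,…,αₙ pairwise distinct elements of K and
m < n. There is a matrix C (depending only on the αᵢ and m) such that for every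
polynomial g of degree < n, if h is the truncation of g obtained by deleting
all terms of degree exceeding m, then the evaluation vector of h equals the
evaluation vector of g multiplied by C : for all i,
h(αᵢ) = ∑ⱼ g(αⱼ) · C j i. -/
theorem degree_reduction_matrix (K : Type*) [Field K] (n m : ℕ)
    (α : Fin n → K) (hα : Function.Injective α) (hm : m < n) :
    ∃ C : Matrix (Fin n) (Fin n) K,
      ∀ g : K[X], g.degree < n →
        ∀ h : K[X], (∀ d : ℕ, h.coeff d = if d ≤ m then g.coeff d else 0) →
          ∀ i : Fin n, h.eval (α i) = ∑ j : Fin n, g.eval (α j) * C j i := by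
  simpa only [Fintype.card_fin] using degree_reduction_matrix_general m hα α
end

section
/- Shamir's scheme is perfectly secret against m curious players: let K be a finite field, let α₁, …, αₙ be pairwise distinct nonzero elements of K, and let S ⊆ {1, …, n} be a coalition with |S| ≤ m. Then for every secret s ∈ K and every assignment of share values (v_j)_{j ∈ S}, the number of polynomials g ∈ K[X] of degree ≤ m satisfying g(0) = s and g(α_j) = v_j for all j ∈ S equals |K|^(m − |S|). In particular, this count is independent of s, so the coalition's shares reveal no information about the secret. -/
/- Adjoining 0 to the coalition's evaluation points turns the constraints on `g` into an
interpolation problem at `|S| + 1` distinct nodes. Its solutions are exactly the polynomials with a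
prescribed remainder modulo the nodal polynomial `∏ (X - xᵢ)`, so such a `g` is determined by its
quotient, which ranges over all polynomials with `m - |S|` free coefficients. -/

open Polynomial

section EuclideanDivision

variable {R : Type*}

theorem mul_mem_degreeLT_natDegree_add_iff [Semiring R] {p q : R[X]} (hp : p.Monic) {k : ℕ} :
    p * q ∈ degreeLT R (p.natDegree + k) ↔ q ∈ degreeLT R k := by
  nontriviality R
  rw [mem_degreeLT, mem_degreeLT, hp.degree_mul_comm, hp.degree_mul, add_comm, Nat.cast_add,
    ← degree_eq_natDegree hp.ne_zero, WithBot.add_lt_add_iff_left (degree_ne_bot.mpr hp.ne_zero)]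

variable [Ring R]

theorem add_mul_mem_degreeLT_natDegree_add_iff {p q r : R[X]} (hp : p.Monic)
    (hr : r.degree < p.degree) {k : ℕ} :
    r + p * q ∈ degreeLT R (p.natDegree + k) ↔ q ∈ degreeLT R k := by
  have hr' : r ∈ degreeLT R (p.natDegree + k) :=
    degreeLT_mono (Nat.le_add_right _ k) (mem_degreeLT.mpr (hr.trans_le degree_le_natDegree))
  rw [Submodule.add_mem_iff_right _ hr', mul_mem_degreeLT_natDegree_add_iff hp]

theorem bijOn_divByMonic {p r : R[X]} (hp : p.Monic) (hr : r.degree < p.degree) (k : ℕ) :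
    Set.BijOn (· /ₘ p) {g | g ∈ degreeLT R (p.natDegree + k) ∧ g %ₘ p = r} (degreeLT R k) := by
  have div_mod (q : R[X]) : (r + p * q) /ₘ p = q ∧ (r + p * q) %ₘ p = r :=
    div_modByMonic_unique q r hp ⟨rfl, hr⟩
  have add_div {g : R[X]} (hg : g %ₘ p = r) : r + p * (g /ₘ p) = g := by
    rw [← hg, modByMonic_add_div]
  refine Set.InvOn.bijOn (f' := (r + p * ·))
    ⟨fun g hg ↦ add_div hg.2, fun q _ ↦ (div_mod q).1⟩ ?_ ?_
  · rintro g ⟨hg, hgr⟩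
    rwa [← add_div hgr, add_mul_mem_degreeLT_natDegree_add_iff hp hr] at hg
  · exact fun q hq ↦ ⟨(add_mul_mem_degreeLT_natDegree_add_iff hp hr).mpr hq, (div_mod q).2⟩

end EuclideanDivision

theorem mk_degreeLT (R : Type*) [Semiring R] (k : ℕ) :
    Cardinal.mk (degreeLT R k) = Cardinal.mk R ^ k := by
  simp [Cardinal.mk_congr (degreeLTEquiv R k).toEquiv]

section Interpolation

theorem eval_modByMonic_nodal {R ι : Type*} [CommRing R] {T : Finset ι} (x : ι → R) {i : ι}
    (hi : i ∈ T) (g : R[X]) :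
    (g %ₘ Lagrange.nodal T x).eval (x i) = g.eval (x i) := by
  simpa only [coe_aeval_eq_eval] using
    aeval_modByMonic_eq_self_of_root (p := g) (Lagrange.eval_nodal_at_node hi)

variable {K ι : Type*} [Field K] {T : Finset ι} {x : ι → K}

theorem modByMonic_nodal_eq_interpolate_iff [DecidableEq ι] (hx : Set.InjOn x T) (y : ι → K)
    (g : K[X]) :
    g %ₘ Lagrange.nodal T x = Lagrange.interpolate T x y ↔ ∀ i ∈ T, g.eval (x i) = y i := by
  have hdeg : (g %ₘ Lagrange.nodal T x).degree < T.card :=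
    (degree_modByMonic_lt g Lagrange.nodal_monic).trans_eq Lagrange.degree_nodal
  rw [← Lagrange.eq_interpolate_iff y hx, and_iff_right hdeg]
  exact forall₂_congr fun i hi ↦ by rw [eval_modByMonic_nodal x hi]

theorem mk_setOf_mem_degreeLT_and_eval_eq (hx : Set.InjOn x T) (y : ι → K) (k : ℕ) :
    Cardinal.mk {g : K[X] | g ∈ degreeLT K (T.card + k) ∧ ∀ i ∈ T, g.eval (x i) = y i} =
      Cardinal.mk K ^ k := by
  classical
  have hdeg : (Lagrange.interpolate T x y).degree < (Lagrange.nodal T x).degree :=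
    (Lagrange.degree_interpolate_lt y hx).trans_eq Lagrange.degree_nodal.symm
  have hbij := bijOn_divByMonic Lagrange.nodal_monic hdeg k
  simp only [modByMonic_nodal_eq_interpolate_iff hx, Lagrange.natDegree_nodal] at hbij
  exact (Cardinal.mk_congr (hbij.equiv _)).trans (mk_degreeLT K k)

end Interpolation

theorem injOn_insertNone_elim {ι β : Type*} {S : Finset ι} {f : ι → β} {b : β}
    (hf : Set.InjOn f S) (hb : ∀ i ∈ S, f i ≠ b) :
    Set.InjOn (fun o : Option ι ↦ o.elim b f) (Finset.insertNone S) := by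
  rintro (_ | i) hi (_ | j) hj hij
  · rfl
  · exact absurd hij.symm (hb j (Finset.some_mem_insertNone.mp hj))
  · exact absurd hij (hb i (Finset.some_mem_insertNone.mp hi))
  · exact congrArg some
      (hf (Finset.some_mem_insertNone.mp hi) (Finset.some_mem_insertNone.mp hj) hij)

theorem shamir_perfect_secrecy_general {K ι : Type*} [Field K] {m : ℕ} {α : ι → K} {S : Finset ι}
    (hα : Set.InjOn α S) (hα0 : ∀ j ∈ S, α j ≠ 0) (hS : S.card ≤ m) (s : K) (v : ι → K) :
    Cardinal.mk {g : K[X] | g.degree ≤ m ∧ g.eval 0 = s ∧ ∀ j ∈ S, g.eval (α j) = v j} =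
      Cardinal.mk K ^ (m - S.card) := by
  have hcard : (Finset.insertNone S).card + (m - S.card) = m + 1 := by
    rw [Finset.card_insertNone]; omega
  have hcount := mk_setOf_mem_degreeLT_and_eval_eq (injOn_insertNone_elim hα hα0)
    (fun o ↦ o.elim s v) (m - S.card)
  simpa only [hcard, degreeLT_succ_eq_degreeLE, mem_degreeLE, Finset.forall_mem_insertNone,
    Option.elim] using hcount

/-- Shamir's scheme is perfectly secret against m curious players:
for a finite field K, pairwise distinct nonzero evaluation points α₁,…,αₙ, and
a coalition S with |S| ≤ m, for every secret s ∈ K and every assignment of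
share values (v j)_{j ∈ S}, the number of polynomials g of degree ≤ m with
g(0) = s and g(αⱼ) = vⱼ for all j ∈ S equals |K|^(m − |S|) — in particular it
is independent of s. -/
theorem shamir_perfect_secrecy (K : Type*) [Field K] [Fintype K]
    (n m : ℕ) (α : Fin n → K) (hα : Function.Injective α) (hα0 : ∀ i, α i ≠ 0)
    (S : Finset (Fin n)) (hS : S.card ≤ m)
    (s : K) (v : Fin n → K) :
    Set.ncard {g : K[X] | g.degree ≤ m ∧ g.eval 0 = s ∧ ∀ j ∈ S, g.eval (α j) = v j}
      = Fintype.card K ^ (m - S.card) := by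
  have hcard := shamir_perfect_secrecy_general hα.injOn (fun j _ ↦ hα0 j) hS s v
  simpa [← Nat.card_coe_set_eq, Nat.card] using congrArg Cardinal.toNat hcard
end
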